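/- Let S₁, S₂ be two Coxeter generating sets for a finitely generated Coxeter group W. If for every J₁ ⊆ S₁ there is some J₂ ⊆ S₂ such that W_{J₁} is conjugate in W to W_{J₂}, then conversely for every J₂ ⊆ S₂ there is some J₁ ⊆ S₁ such that W_{J₂} is conjugate in W to W_{J₁}. -/

import Mathlib

/-- The standard parabolic subgroup of a Coxeter system on the subset `J` of the
index set. -/
def stdParabolic {B W : Type*} [Group W] {M : CoxeterMatrix B}
    (cs : CoxeterSystem M W) (J : Set B) : Subgroup W :=
  Subgroup.closure (cs.simple '' J)

/-- Two subgroups are conjugate in `W`. -/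
def ConjugateSubgroups {W : Type*} [Group W] (P Q : Subgroup W) : Prop :=
  ∃ w : W, ∀ x : W, x ∈ P ↔ w⁻¹ * x * w ∈ Q

namespace CoxGeom

open CoxeterSystem

section Rep

variable {B : Type*} (M : CoxeterMatrix B)

/-- The simple root. -/
noncomputable def rt (i : B) : B →₀ ℝ := Finsupp.single i 1

/-- The simple coroot, `2 B(α_i, ·)`. -/
noncomputable def crt (i : B) : Module.Dual ℝ (B →₀ ℝ) :=
  Finsupp.linearCombination ℝ (fun j => -2 * Real.cos (Real.pi / (M i j : ℝ)))

theorem crt_rt (i j : B) : crt M i (rt j) = -2 * Real.cos (Real.pi / (M i j : ℝ)) := by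
  simp [crt, rt]

theorem crt_self (i : B) : crt M i (rt i) = 2 := by
  simp [crt_rt]

/-- The simple reflection on `V`. -/
noncomputable def sr (i : B) : (B →₀ ℝ) ≃ₗ[ℝ] (B →₀ ℝ) := Module.reflection (crt_self M i)

theorem sr_apply (i : B) (v : B →₀ ℝ) : sr M i v = v - crt M i v • rt i :=
  Module.reflection_apply _ _

theorem sin_ne {m : ℕ} (h : 2 ≤ m) : Real.sin (Real.pi / (m : ℝ)) ≠ 0 := by
  have h2 : (2 : ℝ) ≤ m := by exact_mod_cast h
  apply ne_of_gt
  apply Real.sin_pos_of_pos_of_lt_pi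
  · have := Real.pi_pos; positivity
  · rw [div_lt_iff₀ (by linarith)]; nlinarith [Real.pi_pos]

theorem liftable : M.IsLiftable (sr M) := by
  intro i j
  by_cases hij : i = j
  · subst hij
    simp only [M.diagonal, pow_one]
    ext1 v
    exact Module.involutive_reflection (crt_self M i) v
  have hsym : M j i = M i j := M.symmetric j i
  have h1 := M.off_diagonal i j hij
  obtain ⟨m, hm⟩ : ∃ m, m = M i j := ⟨_, rfl⟩
  rw [← hm] at hsym h1 ⊢
  by_cases h0 : m = 0
  · simp [h0]
  have h2 : 2 ≤ m := by omega
  have e1 : crt M i (rt j) = -2 * Real.cos (Real.pi / (m : ℝ)) := by rw [crt_rt, ← hm]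
  have e2 : crt M j (rt i) = -2 * Real.cos (Real.pi / (m : ℝ)) := by rw [crt_rt, hsym]
  ext1 v
  have key := Module.reflection_mul_reflection_pow_apply (crt_self M i) (crt_self M j) m v
    (2 * Real.cos (2 * (Real.pi / (m : ℝ)))) (by rw [e1, e2, Real.cos_two_mul]; ring)
  unfold sr
  rw [key, e1, e2]
  by_cases hm2 : m = 2
  · subst hm2
    have hc : 2 * (Real.pi / ((2 : ℕ) : ℝ)) = Real.pi := by push_cast; ring
    rw [hc]
    norm_num
    module
  have hs := sin_ne h2
  have hmR : (m : ℝ) ≠ 0 := by exact_mod_cast h0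
  have hs2 : Real.sin (2 * (Real.pi / (m : ℝ))) ≠ 0 := by
    apply ne_of_gt
    have h3 : (3 : ℝ) ≤ m := by exact_mod_cast (by omega : 3 ≤ m)
    apply Real.sin_pos_of_pos_of_lt_pi
    · have := Real.pi_pos; positivity
    · rw [← mul_div_assoc, div_lt_iff₀ (by linarith)]; nlinarith [Real.pi_pos]
  have hS := fun n : ℤ => Polynomial.Chebyshev.S_two_mul_real_cos (2 * (Real.pi / (m : ℝ))) n
  rcases Nat.even_or_odd' m with ⟨k, hk | hk⟩
  · have : (Polynomial.Chebyshev.S ℝ ((m - 2 : ℤ) / 2)).eval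
        (2 * Real.cos (2 * (Real.pi / (m : ℝ)))) = 0 := by
      have := hS ((m - 2 : ℤ) / 2)
      have h4 : ((m - 2 : ℤ) / 2) = k - 1 := by omega
      rw [h4] at this ⊢
      have h5 : ((((k : ℤ) - 1 : ℤ) : ℝ) + 1) * (2 * (Real.pi / (m : ℝ))) = Real.pi := by
        have : (m : ℝ) = 2 * k := by exact_mod_cast hk
        push_cast
        field_simp
        rw [this]; ring
      rw [h5, Real.sin_pi] at this
      exact (mul_eq_zero.mp this).resolve_right hs2
    have h6 : ((m - 1 : ℤ) / 2) = (m - 2 : ℤ) / 2 := by omega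
    rw [h6, this]
    simp
  · have : (Polynomial.Chebyshev.S ℝ k).eval (2 * Real.cos (2 * (Real.pi / (m : ℝ)))) +
      (Polynomial.Chebyshev.S ℝ (k - 1)).eval (2 * Real.cos (2 * (Real.pi / (m : ℝ)))) = 0 := by
      have h7 := hS k
      have h8 := hS (k - 1)
      have h5 : (((k : ℤ) : ℝ) + 1) * (2 * (Real.pi / (m : ℝ))) =
          2 * Real.pi - (((k - 1 : ℤ) : ℝ) + 1) * (2 * (Real.pi / (m : ℝ))) := by
        have : (m : ℝ) = 2 * k + 1 := by exact_mod_cast hk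
        push_cast
        field_simp
        rw [this]; ring
      rw [h5, Real.sin_two_pi_sub] at h7
      refine (mul_eq_zero.mp ?_).resolve_right hs2
      rw [add_mul, h7, h8]; ring
    have h6 : ((m - 1 : ℤ) / 2) = k := by omega
    have h7 : ((m - 3 : ℤ) / 2) = k - 1 := by omega
    have h8 : ((m : ℤ) / 2) = k := by omega
    have h9 : ((m - 2 : ℤ) / 2) = k - 1 := by omega
    rw [h6, h7, h8, h9, this]
    simp

theorem exists_U (m : ℕ) (h1 : m ≠ 1) : ∃ U : ℕ → ℝ, U 0 = 0 ∧ U 1 = 1 ∧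
    (∀ k, U (k + 2) = 2 * Real.cos (Real.pi / (m : ℝ)) * U (k + 1) - U k) ∧
    ∀ k, (m ≠ 0 → k ≤ m) → 0 ≤ U k := by
  by_cases h0 : m = 0
  · subst h0
    refine ⟨fun k => k, by simp, by simp, fun k => ?_, fun k _ => by positivity⟩
    simp; ring
  have h2 : 2 ≤ m := by omega
  have hs := sin_ne h2
  have hm : (0 : ℝ) < m := by exact_mod_cast (by omega : 0 < m)
  have hs' : 0 ≤ Real.sin (Real.pi / (m : ℝ)) := by
    apply Real.sin_nonneg_of_nonneg_of_le_pi
    · have := Real.pi_pos; positivity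
    · exact div_le_self Real.pi_pos.le (by exact_mod_cast (by omega : 1 ≤ m))
  refine ⟨fun k => Real.sin (k * (Real.pi / (m : ℝ))) / Real.sin (Real.pi / (m : ℝ)), by simp,
    by simp [hs], fun k => ?_, fun k hk => ?_⟩
  · have : Real.sin (((k + 2 : ℕ) : ℝ) * (Real.pi / (m : ℝ))) =
      2 * Real.cos (Real.pi / (m : ℝ)) * Real.sin (((k + 1 : ℕ) : ℝ) * (Real.pi / (m : ℝ)))
        - Real.sin (k * (Real.pi / (m : ℝ))) := by
      have a1 : ((k + 2 : ℕ) : ℝ) * (Real.pi / (m : ℝ)) =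
        ((k + 1 : ℕ) : ℝ) * (Real.pi / (m : ℝ)) + Real.pi / (m : ℝ) := by push_cast; ring
      have a2 : (k : ℝ) * (Real.pi / (m : ℝ)) =
        ((k + 1 : ℕ) : ℝ) * (Real.pi / (m : ℝ)) - Real.pi / (m : ℝ) := by push_cast; ring
      rw [a1, a2, Real.sin_add, Real.sin_sub]; ring
    simp only [this]
    field_simp
  · have hk' : (k : ℝ) ≤ m := by exact_mod_cast hk h0
    refine div_nonneg (Real.sin_nonneg_of_nonneg_of_le_pi ?_ ?_) hs'
    · have := Real.pi_pos; positivity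
    · rw [← mul_div_assoc, div_le_iff₀ hm]; nlinarith [Real.pi_pos]

variable {M} {W : Type*} [Group W] (cs : CoxeterSystem M W)

/-- The geometric representation. -/
noncomputable def rho : W →* ((B →₀ ℝ) ≃ₗ[ℝ] (B →₀ ℝ)) := cs.lift ⟨sr M, liftable M⟩

theorem rho_simple (i : B) : rho cs (cs.simple i) = sr M i := cs.lift_apply_simple _ i

theorem rho_simple_apply (i : B) (v : B →₀ ℝ) :
    rho cs (cs.simple i) v = v - crt M i v • rt i := by
  rw [rho_simple, sr_apply]

theorem rho_mul (u w : W) (v : B →₀ ℝ) : rho cs (u * w) v = rho cs u (rho cs w v) := by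
  rw [map_mul]; rfl

theorem rho_one (v : B →₀ ℝ) : rho cs 1 v = v := by
  rw [map_one]; rfl

theorem rho_simple_rt (i : B) : rho cs (cs.simple i) (rt i) = - rt i := by
  rw [rho_simple_apply, crt_self]; module

theorem rho_alt (s t : B) (U : ℕ → ℝ) (h0 : U 0 = 0) (h1 : U 1 = 1)
    (hU : ∀ k, U (k + 2) = 2 * Real.cos (Real.pi / (M s t : ℝ)) * U (k + 1) - U k) (k : ℕ) :
    rho cs (cs.wordProd (alternatingWord s t k)) (rt s) =
      if Even k then U (k + 1) • rt s + U k • rt t else U k • rt s + U (k + 1) • rt t := by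
  induction k with
  | zero => simp [alternatingWord, h0, h1]
  | succ k ih =>
    rw [alternatingWord_succ', wordProd_cons, rho_mul, ih]
    by_cases hk : Even k
    · have hk' : ¬ Even (k + 1) := by simpa [Nat.even_add_one] using hk
      simp only [hk, hk', if_true, if_false]
      rw [rho_simple_apply]
      simp only [map_add, map_smul, crt_self, crt_rt, hU, M.symmetric t s, smul_eq_mul]
      module
    · have hk' : Even (k + 1) := by simpa [Nat.even_add_one] using hk
      simp only [hk, hk', if_true, if_false]
      rw [rho_simple_apply]
      simp only [map_add, map_smul, crt_self, crt_rt, hU, smul_eq_mul]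
      module

/-- Positive vectors. -/
def Pos (v : B →₀ ℝ) : Prop := ∀ i, 0 ≤ v i

theorem pos_lin {v w : B →₀ ℝ} (hv : Pos v) (hw : Pos w) {a b : ℝ} (ha : 0 ≤ a) (hb : 0 ≤ b) :
    Pos (a • v + b • w) := by
  intro i
  have := hv i
  have := hw i
  simp only [Finsupp.add_apply, Finsupp.smul_apply, smul_eq_mul]
  positivity

theorem rho_pos (w : W) (s : B) (h : cs.length w < cs.length (w * cs.simple s)) :
    Pos (rho cs w (rt s)) := by
  induction hn : cs.length w using Nat.strong_induction_on generalizing w s with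
  | _ n ih =>
  subst hn
  by_cases hw : w = 1
  · subst hw
    rw [rho_one]
    intro i
    classical
    rw [rt, Finsupp.single_apply]
    split_ifs <;> norm_num
  obtain ⟨t, ht⟩ := cs.exists_rightDescent_of_ne_one hw
  have hst : s ≠ t := by
    rintro rfl
    unfold CoxeterSystem.IsRightDescent at ht
    omega
  let Q : ℕ → Prop := fun k => ∃ v, w = v * cs.wordProd (alternatingWord s t k) ∧
    cs.length v + k = cs.length w
  have hQ1 : Q 1 := by
    refine ⟨w * cs.simple t, ?_, ?_⟩
    · simp [alternatingWord]
    · exact (cs.isRightDescent_iff).1 ht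
  have hQb : ∀ k, Q k → k ≤ cs.length w := by
    rintro k ⟨v, _, hv⟩; omega
  classical
  obtain ⟨k, hk1, ⟨v, hwv, hlen⟩, hmax⟩ : ∃ k, 1 ≤ k ∧ Q k ∧ ¬ Q (k + 1) := by
    have hex : ∃ k, ¬ Q (k + 1) := ⟨cs.length w, fun hq => by have := hQb _ hq; omega⟩
    rcases Nat.eq_zero_or_pos (Nat.find hex) with h0 | h0
    · have := Nat.find_spec hex
      rw [h0] at this
      exact absurd hQ1 this
    · refine ⟨Nat.find hex, h0, ?_, Nat.find_spec hex⟩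
      have := Nat.find_min hex (m := Nat.find hex - 1) (by omega)
      rw [not_not] at this
      rwa [Nat.sub_add_cancel h0] at this
  -- no further descents
  have hd1 : ¬ cs.IsRightDescent v (if Even k then t else s) := by
    intro hd
    rw [CoxeterSystem.isRightDescent_iff] at hd
    apply hmax
    refine ⟨v * cs.simple (if Even k then t else s), ?_, by omega⟩
    rw [alternatingWord_succ', wordProd_cons, hwv]
    simp [mul_assoc]
  have hd2 : ¬ cs.IsRightDescent v (if Even k then s else t) := by
    intro hd
    rw [CoxeterSystem.isRightDescent_iff] at hd
    obtain ⟨k, rfl⟩ : ∃ k', k = k' + 1 := ⟨k - 1, by omega⟩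
    have e : (if Even (k + 1) then s else t) = (if Even k then t else s) := by
      by_cases hk : Even k <;> simp [Nat.even_add_one, hk]
    rw [e] at hd
    rw [alternatingWord_succ', wordProd_cons, ← mul_assoc] at hwv
    have h1 := cs.length_mul_le (v * cs.simple (if Even k then t else s))
      (cs.wordProd (alternatingWord s t k))
    have h2 := cs.length_wordProd_le (alternatingWord s t k)
    rw [length_alternatingWord] at h2
    rw [← hwv] at h1
    omega
  have hs' : ¬ cs.IsRightDescent v s := by
    by_cases hk : Even k
    · simpa [hk] using hd2
    · simpa [hk] using hd1
  have ht' : ¬ cs.IsRightDescent v t := by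
    by_cases hk : Even k
    · simpa [hk] using hd1
    · simpa [hk] using hd2
  rw [CoxeterSystem.not_isRightDescent_iff] at hs' ht'
  have ps := ih (cs.length v) (by omega) v s (by omega) rfl
  have pt := ih (cs.length v) (by omega) v t (by omega) rfl
  have hkm : M s t ≠ 0 → k + 1 ≤ M s t := by
    intro hm
    by_contra hlt
    have hnr := cs.not_isReduced_alternatingWord t s (m := k + 1)
      (by rwa [M.symmetric]) (by rw [M.symmetric]; omega)
    apply hnr
    unfold CoxeterSystem.IsReduced
    rw [length_alternatingWord]
    apply le_antisymm
    · simpa using cs.length_wordProd_le (alternatingWord t s (k + 1))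
    · have e : w * cs.simple s = v * cs.wordProd (alternatingWord t s (k + 1)) := by
        rw [alternatingWord_succ, wordProd_concat, hwv, mul_assoc]
      have := cs.length_mul_le v (cs.wordProd (alternatingWord t s (k + 1)))
      rw [← e] at this
      omega
  obtain ⟨U, h0, h1, hU, hUp⟩ := exists_U (M s t) (M.off_diagonal s t hst)
  rw [hwv, rho_mul, rho_alt cs s t U h0 h1 hU]
  have a1 := hUp k (fun hm => by have := hkm hm; omega)
  have a2 := hUp (k + 1) hkm
  by_cases hk : Even k
  · simp only [hk, if_true, map_add, map_smul]
    exact pos_lin ps pt a2 a1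
  · simp only [hk, if_false, map_add, map_smul]
    exact pos_lin ps pt a1 a2

theorem rho_neg (w : W) (s : B) (h : cs.length (w * cs.simple s) < cs.length w) :
    Pos (- rho cs w (rt s)) := by
  have := rho_pos cs (w * cs.simple s) s (by simpa using h)
  rwa [rho_mul, rho_simple_rt, map_neg] at this

end Rep


section Dual

variable {B : Type*} {M : CoxeterMatrix B} {W : Type*} [Group W] (cs : CoxeterSystem M W)

/-- The contragredient action. -/
noncomputable def act (w : W) (l : Module.Dual ℝ (B →₀ ℝ)) : Module.Dual ℝ (B →₀ ℝ) :=
  l ∘ₗ (rho cs w⁻¹).toLinearMap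

theorem act_apply (w : W) (l : Module.Dual ℝ (B →₀ ℝ)) (v) : act cs w l v = l (rho cs w⁻¹ v) := rfl

theorem act_mul (u w : W) (l) : act cs (u * w) l = act cs u (act cs w l) := by
  refine LinearMap.ext fun v => ?_
  simp only [act_apply, mul_inv_rev, rho_mul]

theorem act_one (l) : act cs 1 l = l := by
  refine LinearMap.ext fun v => ?_
  simp only [act_apply, inv_one, rho_one]

theorem act_smul (w : W) (c : ℝ) (l) : act cs w (c • l) = c • act cs w l := rfl

theorem act_add (w : W) (k l) : act cs w (k + l) = act cs w k + act cs w l := rfl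

theorem act_neg (w : W) (l) : act cs w (-l) = -act cs w l := rfl

theorem act_inv_act (w : W) (l) : act cs w⁻¹ (act cs w l) = l := by
  rw [← act_mul, inv_mul_cancel, act_one]

theorem act_act_inv (w : W) (l) : act cs w (act cs w⁻¹ l) = l := by
  rw [← act_mul, mul_inv_cancel, act_one]

/-- Fundamental weight: a coordinate functional. -/
noncomputable def om (s : B) : Module.Dual ℝ (B →₀ ℝ) := Finsupp.lapply s

theorem om_apply (s : B) (v : B →₀ ℝ) : om s v = v s := rfl

theorem om_self (s : B) : om s (rt s) = 1 := by simp [om_apply, rt]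

theorem om_ne {s t : B} (h : s ≠ t) : om s (rt t) = 0 := by
  simp [om_apply, rt, h.symm]

theorem dual_ext {k l : Module.Dual ℝ (B →₀ ℝ)} (h : ∀ s, k (rt s) = l (rt s)) : k = l := by
  apply Finsupp.lhom_ext'
  intro s
  ext
  exact h s

/-- Dominant weights. -/
def Dom (l : Module.Dual ℝ (B →₀ ℝ)) : Prop := ∀ s, 0 ≤ l (rt s)

theorem om_dom (s : B) : Dom (om s) := by
  intro t
  by_cases h : s = t
  · subst h; rw [om_self]; norm_num
  · rw [om_ne h]

theorem dual_expand (l : Module.Dual ℝ (B →₀ ℝ)) (v : B →₀ ℝ) :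
    l v = v.sum (fun s c => c * l (rt s)) := by
  conv_lhs => rw [← Finsupp.sum_single v]
  rw [Finsupp.sum, map_sum]
  apply Finset.sum_congr rfl
  intro s _
  have : Finsupp.single s (v s) = v s • rt s := by simp [rt]
  rw [this, map_smul, smul_eq_mul]

theorem dom_pos {l : Module.Dual ℝ (B →₀ ℝ)} (hl : Dom l) {v : B →₀ ℝ} (hv : Pos v) : 0 ≤ l v := by
  rw [dual_expand]
  exact Finset.sum_nonneg fun s _ => mul_nonneg (hv s) (hl s)

theorem act_simple_apply (i : B) (l v) :
    act cs (cs.simple i) l v = l v - crt M i v * l (rt i) := by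
  rw [act_apply, cs.inv_simple, rho_simple_apply, map_sub, map_smul, smul_eq_mul]

theorem act_simple_fix {i : B} {l} (h : l (rt i) = 0) : act cs (cs.simple i) l = l := by
  refine LinearMap.ext fun v => ?_
  rw [act_simple_apply, h]; ring

theorem simple_fix_zero {i : B} {l} (h : act cs (cs.simple i) l = l) : l (rt i) = 0 := by
  have := congrArg (fun f => f (rt i)) h
  simp only [act_simple_apply, crt_self] at this
  linarith

theorem simple_mem {J : Set B} {i : B} (h : i ∈ J) : cs.simple i ∈ stdParabolic cs J :=
  Subgroup.subset_closure ⟨i, h, rfl⟩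

theorem par_mono {J K : Set B} (h : J ⊆ K) : stdParabolic cs J ≤ stdParabolic cs K :=
  Subgroup.closure_mono (Set.image_mono h)

theorem par_univ : stdParabolic cs Set.univ = ⊤ := by
  rw [stdParabolic, Set.image_univ, cs.subgroup_closure_range_simple]

/-- Stabilizer subgroup of a functional. -/
def stab (l : Module.Dual ℝ (B →₀ ℝ)) : Subgroup W where
  carrier := {w | act cs w l = l}
  one_mem' := act_one cs l
  mul_mem' := by
    intro a b ha hb
    change act cs (a * b) l = l
    rw [act_mul, hb, ha]
  inv_mem' := by
    intro a ha
    change act cs a⁻¹ l = l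
    have ha' : act cs a l = l := ha
    conv_lhs => rw [← ha']
    exact act_inv_act cs a l

theorem par_fix {J : Set B} {l} (h : ∀ j ∈ J, l (rt j) = 0) {w : W}
    (hw : w ∈ stdParabolic cs J) : act cs w l = l := by
  have : stdParabolic cs J ≤ stab cs l := by
    rw [stdParabolic, Subgroup.closure_le]
    rintro _ ⟨j, hj, rfl⟩
    exact act_simple_fix cs (h j hj)
  exact this hw

theorem dom_fund {l} (hl : Dom l) (w : W) (hw : Dom (act cs w l)) :
    act cs w l = l ∧ w ∈ stdParabolic cs {s | l (rt s) = 0} := by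
  induction hn : cs.length w using Nat.strong_induction_on generalizing w with
  | _ n ih =>
  subst hn
  by_cases h1 : w = 1
  · subst h1
    exact ⟨act_one cs l, one_mem _⟩
  obtain ⟨s, hs⟩ := cs.exists_rightDescent_of_ne_one h1
  have hneg := rho_neg cs w s hs
  have h0 : 0 ≤ act cs w l (-rho cs w (rt s)) := dom_pos hw hneg
  rw [map_neg, act_apply, ← rho_mul, inv_mul_cancel, rho_one] at h0
  have hz : l (rt s) = 0 := le_antisymm (by linarith) (hl s)
  have hfix := act_simple_fix cs hz
  have e : act cs (w * cs.simple s) l = act cs w l := by rw [act_mul, hfix]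
  have := ih _ hs (w * cs.simple s) (by rwa [e]) rfl
  rw [e] at this
  refine ⟨this.1, ?_⟩
  have h3 := mul_mem this.2 (simple_mem cs (J := {s | l (rt s) = 0}) (i := s) hz)
  simpa using h3

theorem stab_dom {l} (hl : Dom l) (w : W) :
    act cs w l = l ↔ w ∈ stdParabolic cs {s | l (rt s) = 0} :=
  ⟨fun h => (dom_fund cs hl w (by rwa [h])).2, fun h => par_fix cs (fun _ hj => hj) h⟩

theorem mem_par_om (s : B) (w : W) : w ∈ stdParabolic cs {s}ᶜ ↔ act cs w (om s) = om s := by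
  rw [stab_dom cs (om_dom s)]
  have : {t | om s (rt t) = 0} = ({s}ᶜ : Set B) := by
    ext t
    by_cases h : s = t
    · subst h; simp [om_self]
    · simp [om_ne h, Ne.symm h]
  rw [this]

theorem faithful {w : W} (h : ∀ v, rho cs w v = v) : w = 1 := by
  by_contra h1
  obtain ⟨s, hs⟩ := cs.exists_rightDescent_of_ne_one h1
  have := rho_neg cs w s hs s
  rw [h] at this
  simp [rt] at this
  linarith

theorem fix_line {a : B} {l} (h : ∀ w ∈ stdParabolic cs {a}ᶜ, act cs w l = l) :
    l = l (rt a) • om a := by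
  apply dual_ext
  intro s
  by_cases hs : a = s
  · subst hs; simp [om_self]
  · have : s ∈ ({a}ᶜ : Set B) := fun h => hs h.symm
    simp [om_ne hs, simple_fix_zero cs (h _ (simple_mem cs this))]

theorem om_nonzero (a : B) : om a ≠ 0 := by
  intro h
  have := om_self a
  rw [h] at this
  simp at this

theorem conj_om {a b : B} {g : W}
    (h : ∀ x, x ∈ stdParabolic cs {b}ᶜ ↔ g⁻¹ * x * g ∈ stdParabolic cs {a}ᶜ) :
    ∃ c : ℝ, c ≠ 0 ∧ act cs g (om a) = c • om b ∧
      (0 < c → a = b ∧ g ∈ stdParabolic cs {a}ᶜ) := by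
  have hl := fix_line cs (a := b) (l := act cs g (om a)) (by
    intro w hw
    have := (mem_par_om cs a _).1 ((h w).1 hw)
    rw [mul_assoc, act_mul, act_mul] at this
    rw [← act_act_inv cs g (act cs w _), this])
  refine ⟨_, ?_, hl, ?_⟩
  · intro h0
    rw [h0, zero_smul] at hl
    apply om_nonzero a
    rw [← act_inv_act cs g (om a), hl]
    rfl
  · intro hc
    have hd : Dom (act cs g (om a)) := by
      rw [hl]
      intro s
      exact mul_nonneg hc.le (om_dom b s)
    obtain ⟨h1, h2⟩ := dom_fund cs (om_dom a) g hd
    have hab : a = b := by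
      by_contra hab
      rw [h1] at hl
      have := congrArg (fun f => f (rt a)) hl
      simp [om_self, om_ne (Ne.symm hab)] at this
    exact ⟨hab, (mem_par_om cs a g).2 h1⟩

theorem par_ne_top (a : B) : ∃ w, w ∉ stdParabolic cs {a}ᶜ := by
  refine ⟨cs.simple a, fun h => ?_⟩
  have := simple_fix_zero cs ((mem_par_om cs a _).1 h)
  rw [om_self] at this
  norm_num at this

/-- L1: classes of maximal parabolics have size at most two. -/
theorem class_le_two {a b c : B} (hab : a ≠ b) (hac : a ≠ c)
    (h1 : ConjugateSubgroups (stdParabolic cs {b}ᶜ) (stdParabolic cs {a}ᶜ))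
    (h2 : ConjugateSubgroups (stdParabolic cs {c}ᶜ) (stdParabolic cs {a}ᶜ)) : b = c := by
  obtain ⟨g, hg⟩ := h1
  obtain ⟨k, hk⟩ := h2
  obtain ⟨x, hx0, hx, hx'⟩ := conj_om cs hg
  obtain ⟨y, hy0, hy, hy'⟩ := conj_om cs hk
  have hxn : x < 0 := lt_of_le_of_ne (not_lt.1 fun h => hab (hx' h).1) hx0
  have hyn : y < 0 := lt_of_le_of_ne (not_lt.1 fun h => hac (hy' h).1) hy0
  -- k g⁻¹ ω_b = (y/x) ω_c
  have e : act cs (k * g⁻¹) (om b) = (y / x) • om c := by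
    have : om b = x⁻¹ • act cs g (om a) := by
      rw [hx, smul_smul, inv_mul_cancel₀ hx0, one_smul]
    rw [this, act_smul, act_mul, act_inv_act, hy, smul_smul]
    congr 1
    field_simp
  have hd : Dom (act cs (k * g⁻¹) (om b)) := by
    rw [e]
    intro s
    exact mul_nonneg (div_nonneg_of_nonpos hyn.le hxn.le) (om_dom c s)
  have := (dom_fund cs (om_dom b) _ hd).1
  by_contra hbc
  rw [this] at e
  have := congrArg (fun f => f (rt b)) e
  simp [om_self, om_ne (Ne.symm hbc)] at this

/-- A subgroup of finite index (elementary form). -/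
def FinIdx (P : Subgroup W) : Prop := ∃ F : Set W, F.Finite ∧ ∀ w, ∃ f ∈ F, f⁻¹ * w ∈ P

/-- Self-normalizing. -/
def SelfNorm (P : Subgroup W) : Prop := ∀ g : W, (∀ x, x ∈ P ↔ g⁻¹ * x * g ∈ P) → g ∈ P

theorem exists_min (P : Subgroup W) (w : W) : ∃ d, d⁻¹ * w ∈ P ∧
    ∀ e, d⁻¹ * e ∈ P → cs.length d ≤ cs.length e := by
  classical
  have hex : ∃ n, ∃ d, d⁻¹ * w ∈ P ∧ cs.length d = n := ⟨_, w, by simp, rfl⟩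
  obtain ⟨d, hd, hl⟩ := Nat.find_spec hex
  refine ⟨d, hd, fun e he => ?_⟩
  rw [hl]
  apply Nat.find_min' hex
  refine ⟨e, ?_, rfl⟩
  have := mul_mem (inv_mem he) hd
  simpa [mul_assoc] using this

theorem min_len [Finite B] {a b : B} {g : W} {c : ℝ} (hc : c < 0)
    (hg : act cs g (om a) = c • om b) (d : W)
    (hd : ∀ e, d⁻¹ * e ∈ stdParabolic cs {a}ᶜ → cs.length d ≤ cs.length e) :
    cs.length (g * d⁻¹) + cs.length d = cs.length g := by
  induction hn : cs.length d using Nat.strong_induction_on generalizing d with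
  | _ n ih =>
  subst hn
  by_cases h1 : d = 1
  · subst h1; simp
  obtain ⟨s, hs⟩ := cs.exists_leftDescent_of_ne_one h1
  have hs' := cs.isLeftDescent_iff.1 hs
  obtain ⟨d', rfl⟩ : ∃ d', d = cs.simple s * d' := ⟨cs.simple s * d, by simp⟩
  rw [cs.simple_mul_simple_cancel_left] at hs'
  have hd' := ih (cs.length d') (by omega) d' (by
    intro e he
    have h2 := hd (cs.simple s * e) (by simpa [mul_assoc] using he)
    rcases cs.length_simple_mul e s with h | h <;> omega) rfl
  have hpos := rho_pos cs d'⁻¹ s (by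
    rw [← cs.length_inv, ← cs.length_inv (d'⁻¹ * _)]; simp; omega)
  have hom : 0 ≤ om a (rho cs d'⁻¹ (rt s)) := dom_pos (om_dom a) hpos
  rcases hom.lt_or_eq with hlt | heq
  · have e1 : act cs g (om a) (rho cs (g * d'⁻¹) (rt s)) = om a (rho cs d'⁻¹ (rt s)) := by
      rw [act_apply, ← rho_mul, inv_mul_cancel_left]
    have hdesc : cs.length (g * d'⁻¹ * cs.simple s) < cs.length (g * d'⁻¹) := by
      by_contra hnot
      have hne := cs.length_mul_simple_ne (g * d'⁻¹) s
      have hp := rho_pos cs (g * d'⁻¹) s (by omega)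
      have h3 := dom_pos (om_dom b) hp
      rw [hg] at e1
      have e2 : c * om b (rho cs (g * d'⁻¹) (rt s)) = om a (rho cs d'⁻¹ (rt s)) := e1
      nlinarith
    have h4 := cs.isRightDescent_iff.1 hdesc
    have e3 : g * (cs.simple s * d')⁻¹ = g * d'⁻¹ * cs.simple s := by simp [mul_assoc]
    rw [e3]
    omega
  · exfalso
    have hz : act cs d' (om a) (rt s) = 0 := by rw [act_apply, heq]
    have hfix := act_simple_fix cs hz
    have hmem : d'⁻¹ * cs.simple s * d' ∈ stdParabolic cs {a}ᶜ := by
      rw [mem_par_om, mul_assoc, act_mul, act_mul, hfix, act_inv_act]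
    have h5 := hd d' (by simpa [mul_assoc] using hmem)
    omega

theorem finite_length_le [Finite B] (N : ℕ) : {w : W | cs.length w ≤ N}.Finite := by
  refine ((List.finite_length_le B N).image cs.wordProd).subset ?_
  intro w hw
  obtain ⟨l, hl, rfl⟩ := cs.exists_isReduced w
  exact ⟨l, by simpa [hl.eq] using hw, rfl⟩

/-- L2 -/
theorem two_class [Finite B] {a b : B} (hab : a ≠ b)
    (h : ConjugateSubgroups (stdParabolic cs {b}ᶜ) (stdParabolic cs {a}ᶜ)) :
    FinIdx (stdParabolic cs {a}ᶜ) ∧ SelfNorm (stdParabolic cs {a}ᶜ) := by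
  obtain ⟨g, hg⟩ := h
  obtain ⟨x, hx0, hx, hx'⟩ := conj_om cs hg
  have hxn : x < 0 := lt_of_le_of_ne (not_lt.1 fun h => hab (hx' h).1) hx0
  constructor
  · refine ⟨_, finite_length_le cs (cs.length g), fun w => ?_⟩
    obtain ⟨d, hd1, hd2⟩ := exists_min cs (stdParabolic cs {a}ᶜ) w
    refine ⟨d, ?_, hd1⟩
    have := min_len cs hxn hx d hd2
    change cs.length d ≤ cs.length g
    omega
  · intro k hk
    obtain ⟨y, hy0, hy, hy'⟩ := conj_om cs hk
    by_cases hyp : 0 < y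
    · exact (hy' hyp).2
    exfalso
    have hyn : y < 0 := lt_of_le_of_ne (not_lt.1 hyp) hy0
    have e : act cs (g * k) (om a) = (y * x) • om b := by
      rw [act_mul, hy, act_smul, hx, smul_smul]
    have hd : Dom (act cs (g * k) (om a)) := by
      rw [e]
      intro s
      exact mul_nonneg (mul_nonneg_of_nonpos_of_nonpos hyn.le hxn.le) (om_dom b s)
    have := (dom_fund cs (om_dom a) _ hd).1
    rw [this] at e
    have := congrArg (fun f => f (rt a)) e
    simp [om_self, om_ne (Ne.symm hab)] at this

/-- L3 -/
theorem exists_mate {s : B} (hf : FinIdx (stdParabolic cs {s}ᶜ))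
    (hn : SelfNorm (stdParabolic cs {s}ᶜ)) :
    ∃ t, t ≠ s ∧ ConjugateSubgroups (stdParabolic cs {t}ᶜ) (stdParabolic cs {s}ᶜ) := by
  obtain ⟨F, hF, hF'⟩ := hf
  -- bound on lengths of minimal representatives
  obtain ⟨N, hN⟩ : ∃ N, ∀ f ∈ F, cs.length f ≤ N := by
    obtain ⟨N, hN⟩ := (hF.image cs.length).bddAbove
    exact ⟨N, fun f hf => hN ⟨f, hf, rfl⟩⟩
  let Q : ℕ → Prop := fun k => ∃ d, cs.length d = k ∧
    ∀ e, d⁻¹ * e ∈ stdParabolic cs {s}ᶜ → cs.length d ≤ cs.length e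
  have hQb : ∀ k, Q k → k ≤ N := by
    rintro k ⟨d, rfl, hd⟩
    obtain ⟨f, hfF, hf⟩ := hF' d
    have := inv_mem hf
    exact (hd f (by simpa using this)).trans (hN f hfF)
  have hQ0 : Q 0 := ⟨1, by simp, by simp⟩
  classical
  have hQs := Nat.findGreatest_spec (P := Q) (Nat.zero_le N) hQ0
  have hQm : ∀ k, Q k → k ≤ Nat.findGreatest Q N := fun k hk =>
    Nat.le_findGreatest (hQb k hk) hk
  obtain ⟨d, hdl, hd⟩ := hQs
  rw [← hdl] at hQm
  -- anti-dominant
  have hdom : Dom (-act cs d (om s)) := by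
    intro t
    rw [LinearMap.neg_apply]
    by_contra hcon
    have hpos : 0 < act cs d (om s) (rt t) := by linarith
    obtain ⟨e, he1, he2⟩ := exists_min cs (stdParabolic cs {s}ᶜ) (cs.simple t * d)
    have hel := hQm _ ⟨e, rfl, he2⟩
    have hee : act cs e (om s) = act cs (cs.simple t * d) (om s) := by
      have := (mem_par_om cs s _).1 he1
      rw [act_mul] at this
      rw [← act_act_inv cs e (act cs (cs.simple t * d) _), this]
    have h1 : act cs e (om s) (rt t) = - act cs d (om s) (rt t) := by
      rw [hee, act_mul, act_simple_apply, crt_self]; ring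
    have h2 : cs.length (e⁻¹ * cs.simple t) < cs.length e⁻¹ := by
      by_contra hnot
      have hne := cs.length_mul_simple_ne e⁻¹ t
      have hp := dom_pos (om_dom s) (rho_pos cs e⁻¹ t (by omega))
      rw [act_apply] at h1
      linarith
    have h3 : cs.length (cs.simple t * e) < cs.length e := by
      rw [← cs.length_inv, ← cs.length_inv e]; simpa using h2
    have h4 := hd (cs.simple t * e) (by
      have := inv_mem he1
      simpa [mul_assoc] using this)
    omega
  -- the stabilizer
  have hne : ∃ t, 0 < (-act cs d (om s)) (rt t) := by
    by_contra hcon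
    push Not at hcon
    have : -act cs d (om s) = 0 := dual_ext fun t => le_antisymm (hcon t) (hdom t)
    rw [neg_eq_zero] at this
    apply om_nonzero s
    rw [← act_inv_act cs d (om s), this]
    rfl
  obtain ⟨t, ht⟩ := hne
  have hst : ∀ x, x ∈ stdParabolic cs {u | (-act cs d (om s)) (rt u) = 0} ↔
      d⁻¹ * x * d ∈ stdParabolic cs {s}ᶜ := by
    intro x
    rw [← stab_dom cs hdom, mem_par_om, act_neg, neg_inj, mul_assoc, act_mul, act_mul]
    constructor
    · intro h; rw [h, act_inv_act]
    · intro h; rw [← act_act_inv cs d (act cs x _), h]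
  have hot : ∀ w ∈ stdParabolic cs {s}ᶜ, act cs w (act cs d⁻¹ (om t)) = act cs d⁻¹ (om t) := by
    intro w hw
    have h1 := (hst (d * w * d⁻¹)).2 (by simpa [mul_assoc] using hw)
    have h2 := par_fix cs (l := om t) (by
      intro j hj
      apply om_ne
      rintro rfl
      exact ht.ne' hj) h1
    rw [mul_assoc, act_mul, act_mul] at h2
    rw [← act_inv_act cs d (act cs w _), h2]
  have hl := fix_line cs hot
  obtain ⟨c, hc⟩ : ∃ c : ℝ, om t = c • act cs d (om s) := by
    refine ⟨act cs d⁻¹ (om t) (rt s), ?_⟩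
    rw [← act_smul, ← hl, act_act_inv]
  have hJ : {u | (-act cs d (om s)) (rt u) = 0} = ({t}ᶜ : Set B) := by
    ext u
    by_cases hu : t = u
    · subst hu; simp only [Set.mem_ofPred_eq, Set.mem_compl_iff, Set.mem_singleton_iff,
        not_true_eq_false, iff_false]; exact ht.ne'
    · have h1 : om t (rt u) = 0 := om_ne hu
      have h2 : om t (rt t) = 1 := om_self t
      rw [hc, LinearMap.smul_apply, smul_eq_mul] at h1 h2
      have hc0 : c ≠ 0 := by rintro rfl; simp at h2
      have h3 := (mul_eq_zero.1 h1).resolve_left hc0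
      simp [h3, Ne.symm hu]
  rw [hJ] at hst
  refine ⟨t, ?_, d, hst⟩
  rintro rfl
  have := (mem_par_om cs t d).1 (hn d hst)
  rw [this] at ht
  have h2 := om_self t
  rw [LinearMap.neg_apply, h2] at ht
  linarith

end Dual


section Sub

variable {B : Type*} {M : CoxeterMatrix B} {W : Type*} [Group W] (cs : CoxeterSystem M W)

/-- A dominant functional with stabilizer `W_J`. -/
noncomputable def lam (J : Set B) : Module.Dual ℝ (B →₀ ℝ) := by
  classical exact Finsupp.linearCombination ℝ (fun s => if s ∈ J then (0 : ℝ) else 1)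

theorem lam_mem {J : Set B} {s : B} (h : s ∈ J) : lam J (rt s) = 0 := by
  simp [lam, rt, h]

theorem lam_not_mem {J : Set B} {s : B} (h : s ∉ J) : lam J (rt s) = 1 := by
  simp [lam, rt, h]

theorem mem_par_lam (J : Set B) (w : W) : w ∈ stdParabolic cs J ↔ act cs w (lam J) = lam J := by
  rw [stab_dom cs (l := lam J)]
  · have : {t | lam J (rt t) = 0} = J := by
      ext t
      by_cases h : t ∈ J
      · simp [lam_mem h, h]
      · simp [lam_not_mem h, h]
    rw [this]
  · intro s
    by_cases h : s ∈ J
    · rw [lam_mem h]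
    · rw [lam_not_mem h]; norm_num

/-- A parabolic contained in `W_K` is a parabolic of `W_K`. -/
theorem sub_par {J K : Set B} {g : W}
    (h : ∀ x, x ∈ stdParabolic cs J → g * x * g⁻¹ ∈ stdParabolic cs K) :
    ∃ a ∈ stdParabolic cs K, ∃ J' : Set B, J' ⊆ K ∧
      ∀ x, x ∈ stdParabolic cs J' ↔ (a * g)⁻¹ * x * (a * g) ∈ stdParabolic cs J := by
  classical
  obtain ⟨d, hd1, hd2⟩ := exists_min cs (stdParabolic cs K) g⁻¹
  obtain ⟨m, hm⟩ : ∃ m, m = act cs d⁻¹ (lam J) := ⟨_, rfl⟩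
  have hlamdom : Dom (lam J) := by
    intro s
    by_cases h : s ∈ J
    · rw [lam_mem h]
    · rw [lam_not_mem h]; norm_num
  have hmK : ∀ k ∈ K, 0 ≤ m (rt k) := by
    intro k hk
    rw [hm, act_apply, inv_inv]
    apply dom_pos hlamdom
    apply rho_pos
    have h1 := hd2 (d * cs.simple k) (by simpa using simple_mem cs hk)
    have h2 := cs.length_mul_simple_ne d k
    omega
  obtain ⟨n, hn⟩ : ∃ n : Module.Dual ℝ (B →₀ ℝ), n =
      Finsupp.linearCombination ℝ (fun s => if s ∈ K then (0 : ℝ) else 1 - m (rt s)) := ⟨_, rfl⟩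
  have hnK : ∀ k ∈ K, n (rt k) = 0 := by
    intro k hk; simp [hn, rt, hk]
  have hnK' : ∀ k, k ∉ K → n (rt k) = 1 - m (rt k) := by
    intro k hk
    simp only [hn]
    conv_lhs => rw [rt]
    simp [hk]
  have hdom : Dom (m + n) := by
    intro s
    rw [LinearMap.add_apply]
    by_cases hs : s ∈ K
    · rw [hnK s hs, add_zero]; exact hmK s hs
    · rw [hnK' s hs]; linarith
  have hzero : ∀ s, (m + n) (rt s) = 0 → s ∈ K ∧ m (rt s) = 0 := by
    intro s hs
    rw [LinearMap.add_apply] at hs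
    by_cases hsK : s ∈ K
    · rw [hnK s hsK, add_zero] at hs; exact ⟨hsK, hs⟩
    · rw [hnK' s hsK] at hs; linarith
  refine ⟨d⁻¹ * g⁻¹, hd1, {s | (m + n) (rt s) = 0}, fun s hs => (hzero s hs).1, fun x => ?_⟩
  rw [mul_assoc d⁻¹, inv_mul_cancel, mul_one, inv_inv, mem_par_lam cs J]
  have hiff : act cs (d * x * d⁻¹) (lam J) = lam J ↔ act cs x m = m := by
    rw [mul_assoc, act_mul, act_mul, ← hm]
    constructor
    · intro h1
      rw [← act_inv_act cs d (act cs x m), h1, hm]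
    · intro h1
      rw [h1, hm, act_act_inv]
  rw [hiff]
  constructor
  · intro hx
    exact par_fix cs (fun j hj => (hzero j hj).2) hx
  · intro hx
    have hxJ := (mem_par_lam cs J _).2 (hiff.2 hx)
    have h1 := h _ hxJ
    have hxK : x ∈ stdParabolic cs K := by
      have h2 := mul_mem (mul_mem hd1 h1) (inv_mem hd1)
      have e : d⁻¹ * g⁻¹ * (g * (d * x * d⁻¹) * g⁻¹) * (d⁻¹ * g⁻¹)⁻¹ = x := by group
      rwa [e] at h2
    rw [← stab_dom cs hdom, act_add, hx, par_fix cs hnK hxK]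

/-- Restriction of a Coxeter matrix. -/
def restr (M : CoxeterMatrix B) (K : Set B) : CoxeterMatrix K where
  M := fun i j => M i j
  isSymm := by
    ext i j
    exact M.symmetric _ _
  diagonal i := M.diagonal i
  off_diagonal i j h := M.off_diagonal i j (fun h' => h (Subtype.ext h'))

/-- Simple reflections as elements of the parabolic. -/
def simpleK (K : Set B) (k : K) : stdParabolic cs K := ⟨cs.simple k, simple_mem cs k.2⟩

theorem liftK (K : Set B) : (restr M K).IsLiftable (simpleK cs K) := by
  intro i j
  ext
  exact cs.simple_mul_simple_pow i j

/-- The canonical map from the Coxeter group of the restricted matrix. -/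
noncomputable def phi (K : Set B) : (restr M K).Group →* stdParabolic cs K :=
  (restr M K).toCoxeterSystem.lift ⟨simpleK cs K, liftK cs K⟩

theorem phi_simple (K : Set B) (k : K) :
    phi cs K ((restr M K).toCoxeterSystem.simple k) = simpleK cs K k :=
  CoxeterSystem.lift_apply_simple _ _ k

/-- Inclusion of `V_K`. -/
noncomputable def emb (K : Set B) : (K →₀ ℝ) →ₗ[ℝ] (B →₀ ℝ) :=
  Finsupp.lmapDomain ℝ ℝ Subtype.val

theorem emb_rt (K : Set B) (k : K) : emb K (rt k) = rt (k : B) := by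
  simp [emb, rt]

theorem crt_emb (K : Set B) (k : K) (v : K →₀ ℝ) :
    crt M k (emb K v) = crt (restr M K) k v := by
  have : crt M k ∘ₗ emb K = crt (restr M K) k := by
    apply dual_ext
    intro s
    rw [LinearMap.comp_apply, emb_rt, crt_rt, crt_rt]
    rfl
  rw [← this]; rfl

theorem rho_emb (K : Set B) (x : (restr M K).Group) (v : K →₀ ℝ) :
    rho cs (phi cs K x : W) (emb K v) = emb K (rho (restr M K).toCoxeterSystem x v) := by
  induction x using (restr M K).toCoxeterSystem.simple_induction generalizing v with
  | simple k =>
    rw [phi_simple, rho_simple_apply, map_sub, map_smul, emb_rt]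
    change rho cs (cs.simple k) _ = _
    rw [rho_simple_apply, crt_emb]
  | one => simp
  | mul a b ha hb =>
    rw [map_mul, Subgroup.coe_mul, rho_mul, rho_mul, hb, ha]

theorem phi_bij (K : Set B) : Function.Bijective (phi cs K) := by
  constructor
  · rw [injective_iff_map_eq_one]
    intro x hx
    apply faithful (restr M K).toCoxeterSystem
    intro v
    have := rho_emb cs K x v
    rw [hx, Subgroup.coe_one, rho_one] at this
    exact (Finsupp.mapDomain_injective Subtype.val_injective this).symm
  · rintro ⟨x, hx⟩
    suffices h : stdParabolic cs K ≤ ((phi cs K).range).map (stdParabolic cs K).subtype by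
      obtain ⟨y, ⟨z, rfl⟩, hz⟩ := h hx
      exact ⟨z, Subtype.ext hz⟩
    conv_lhs => rw [stdParabolic]
    rw [Subgroup.closure_le]
    rintro _ ⟨k, hk, rfl⟩
    exact ⟨_, ⟨_, phi_simple cs K ⟨k, hk⟩⟩, rfl⟩

/-- The Coxeter system of a standard parabolic subgroup. -/
noncomputable def sysK (K : Set B) : CoxeterSystem (restr M K) (stdParabolic cs K) :=
  (restr M K).toCoxeterSystem.map (MulEquiv.ofBijective (phi cs K) (phi_bij cs K))

theorem sysK_simple (K : Set B) (k : K) : (sysK cs K).simple k = simpleK cs K k := by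
  rw [sysK, CoxeterSystem.map_simple]
  exact phi_simple cs K k

theorem mem_sysK (K : Set B) (J : Set K) (x : stdParabolic cs K) :
    x ∈ stdParabolic (sysK cs K) J ↔ (x : W) ∈ stdParabolic cs (Subtype.val '' J) := by
  have : (stdParabolic (sysK cs K) J).map (stdParabolic cs K).subtype =
      stdParabolic cs (Subtype.val '' J) := by
    change (Subgroup.closure ((sysK cs K).simple '' J)).map _ = Subgroup.closure (cs.simple '' _)
    rw [MonoidHom.map_closure]
    congr 1
    rw [Set.image_image, Set.image_image]
    apply Set.image_congr
    intro k _
    rw [sysK_simple]; rfl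
  rw [← this]
  constructor
  · intro h; exact ⟨x, h, rfl⟩
  · rintro ⟨y, hy, hyx⟩
    rwa [← Subtype.ext hyx]

theorem mem_map {H : Type*} [Group H] (e : W ≃* H) (J : Set B) (x : H) :
    x ∈ stdParabolic (cs.map e) J ↔ e.symm x ∈ stdParabolic cs J := by
  have : (stdParabolic cs J).map e.toMonoidHom = stdParabolic (cs.map e) J := by
    change (Subgroup.closure (cs.simple '' J)).map _ = Subgroup.closure ((cs.map e).simple '' J)
    rw [MonoidHom.map_closure]
    congr 1
    rw [Set.image_image]
    rfl
  rw [← this]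
  constructor
  · rintro ⟨y, hy, rfl⟩
    simpa using hy
  · intro h
    exact ⟨_, h, by simp⟩

end Sub

section Conj

variable {W : Type*} [Group W]

theorem conj_symm {P Q : Subgroup W} (h : ConjugateSubgroups P Q) : ConjugateSubgroups Q P := by
  obtain ⟨w, hw⟩ := h
  refine ⟨w⁻¹, fun x => ?_⟩
  rw [hw]
  have : w⁻¹ * (w⁻¹⁻¹ * x * w⁻¹) * w = x := by group
  rw [this]

theorem conj_refl (P : Subgroup W) : ConjugateSubgroups P P := ⟨1, by simp⟩

theorem conj_trans {P Q R : Subgroup W} (h : ConjugateSubgroups P Q)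
    (h' : ConjugateSubgroups Q R) : ConjugateSubgroups P R := by
  obtain ⟨w, hw⟩ := h
  obtain ⟨u, hu⟩ := h'
  refine ⟨w * u, fun x => ?_⟩
  rw [hw, hu]
  have : u⁻¹ * (w⁻¹ * x * w) * u = (w * u)⁻¹ * x * (w * u) := by group
  rw [this]

theorem finIdx_conj {P Q : Subgroup W} (h : ConjugateSubgroups P Q) (hP : FinIdx P) :
    FinIdx Q := by
  obtain ⟨w, hw⟩ := h
  obtain ⟨F, hF, hF'⟩ := hP
  refine ⟨(fun f => f * w) '' F, hF.image _, fun x => ?_⟩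
  obtain ⟨f, hf, hfx⟩ := hF' (x * w⁻¹)
  refine ⟨_, ⟨f, hf, rfl⟩, ?_⟩
  rw [hw] at hfx
  have : w⁻¹ * (f⁻¹ * (x * w⁻¹)) * w = (f * w)⁻¹ * x := by group
  rwa [this] at hfx

theorem selfNorm_conj {P Q : Subgroup W} (h : ConjugateSubgroups P Q) (hP : SelfNorm P) :
    SelfNorm Q := by
  obtain ⟨w, hw⟩ := h
  intro g hg
  have := hP (w * g * w⁻¹) (fun x => by
    rw [hw, hw, hg]
    have : g⁻¹ * (w⁻¹ * x * w) * g = w⁻¹ * ((w * g * w⁻¹)⁻¹ * x * (w * g * w⁻¹)) * w := by group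
    rw [this])
  rw [hw] at this
  have e : w⁻¹ * (w * g * w⁻¹) * w = g := by group
  rwa [e] at this

end Conj


section Main

section Max

variable {W : Type*} [Group W] {B₁ B₂ : Type*}
  {M₁ : CoxeterMatrix B₁} {M₂ : CoxeterMatrix B₂}
  (cs₁ : CoxeterSystem M₁ W) (cs₂ : CoxeterSystem M₂ W)

theorem simple_ne_one (t : B₁) : cs₁.simple t ≠ 1 := by
  intro h
  have := cs₁.length_simple t
  rw [h, cs₁.length_one] at this
  omega

theorem mem_single {t : B₁} {x : W} (hx : x ∈ stdParabolic cs₁ {t}) :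
    x = 1 ∨ x = cs₁.simple t := by
  change x ∈ Subgroup.closure (cs₁.simple '' {t}) at hx
  induction hx using Subgroup.closure_induction with
  | mem x hx =>
    obtain ⟨j, hj, rfl⟩ := hx
    rw [Set.mem_singleton_iff.1 hj]; exact Or.inr rfl
  | one => exact Or.inl rfl
  | mul x y hx hy h1 h2 =>
    rcases h1 with rfl | rfl <;> rcases h2 with rfl | rfl <;> simp
  | inv x hx h1 =>
    rcases h1 with rfl | rfl <;> simp

theorem step_a (h : ∀ J₁ : Set B₁, ∃ J₂ : Set B₂,
      ConjugateSubgroups (stdParabolic cs₁ J₁) (stdParabolic cs₂ J₂)) (t : B₁) :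
    ∃ r k, cs₁.simple t = k * cs₂.simple r * k⁻¹ := by
  obtain ⟨J, w, hw⟩ := h {t}
  rcases J.eq_empty_or_nonempty with rfl | ⟨j, hj⟩
  · exfalso
    have := (hw _).1 (simple_mem cs₁ (Set.mem_singleton t))
    rw [stdParabolic, Set.image_empty, Subgroup.closure_empty, Subgroup.mem_bot] at this
    apply simple_ne_one cs₁ t
    have e : cs₁.simple t = w * (w⁻¹ * cs₁.simple t * w) * w⁻¹ := by group
    rw [e, this]; group
  · refine ⟨j, w, ?_⟩
    have hm : w * cs₂.simple j * w⁻¹ ∈ stdParabolic cs₁ {t} := by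
      rw [hw]
      have : w⁻¹ * (w * cs₂.simple j * w⁻¹) * w = cs₂.simple j := by group
      rw [this]
      exact simple_mem cs₂ hj
    rcases mem_single cs₁ hm with h1 | h1
    · exfalso
      apply simple_ne_one cs₂ j
      have e : cs₂.simple j = w⁻¹ * (w * cs₂.simple j * w⁻¹) * w := by group
      rw [e, h1]; group
    · exact h1.symm

theorem refl_fix {r : B₂} {k : W} {l} (h : l (rho cs₂ k (rt r)) = 0) :
    act cs₂ (k * cs₂.simple r * k⁻¹) l = l := by
  rw [act_mul, act_mul, act_simple_fix, act_act_inv]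
  rw [act_apply, inv_inv, h]

theorem fix_all {l} (h : ∀ t, act cs₂ (cs₁.simple t) l = l) : l = 0 := by
  have h1 : (⊤ : Subgroup W) ≤ stab cs₂ l := by
    rw [← cs₁.subgroup_closure_range_simple, Subgroup.closure_le]
    rintro _ ⟨t, rfl⟩
    exact h t
  apply dual_ext
  intro s
  have : act cs₂ (cs₂.simple s) l = l := h1 (Subgroup.mem_top _)
  rw [simple_fix_zero cs₂ this]; rfl

theorem step_b [Finite B₁] [Finite B₂] (h : ∀ J₁ : Set B₁, ∃ J₂ : Set B₂,
      ConjugateSubgroups (stdParabolic cs₁ J₁) (stdParabolic cs₂ J₂)) :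
    Nat.card B₂ ≤ Nat.card B₁ := by
  classical
  have := Fintype.ofFinite B₁
  have := Fintype.ofFinite B₂
  choose r k hk using step_a cs₁ cs₂ h
  let f : Module.Dual ℝ (B₂ →₀ ℝ) →ₗ[ℝ] (B₁ → ℝ) :=
    { toFun := fun l t => l (rho cs₂ (k t) (rt (r t)))
      map_add' := fun _ _ => rfl
      map_smul' := fun _ _ => rfl }
  have hf : Function.Injective f := by
    rw [injective_iff_map_eq_zero]
    intro l hl
    apply fix_all cs₁ cs₂
    intro t
    rw [hk]
    exact refl_fix cs₂ (congrFun hl t)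
  have := LinearMap.finrank_le_finrank_of_injective hf
  rw [Subspace.dual_finrank_eq] at this
  simpa [Nat.card_eq_fintype_card] using this

theorem step_c (h : ∀ J₁ : Set B₁, ∃ J₂ : Set B₂,
      ConjugateSubgroups (stdParabolic cs₁ J₁) (stdParabolic cs₂ J₂)) (t : B₁) :
    ∃ s, ConjugateSubgroups (stdParabolic cs₁ {t}ᶜ) (stdParabolic cs₂ {s}ᶜ) := by
  obtain ⟨r, k, hk⟩ := step_a cs₁ cs₂ h t
  obtain ⟨K, w, hw⟩ := h {t}ᶜ
  have key : ∀ l : Module.Dual ℝ (B₂ →₀ ℝ), (∀ j ∈ K, l (rt j) = 0) →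
      act cs₂ w l (rho cs₂ k (rt r)) = 0 → l = 0 := by
    intro l hl h0
    have h1 : act cs₂ w l = 0 := by
      apply fix_all cs₁ cs₂
      intro t'
      by_cases ht : t' = t
      · subst ht
        rw [hk]; exact refl_fix cs₂ h0
      · have h2 := (hw _).1 (simple_mem cs₁ (show t' ∈ ({t}ᶜ : Set B₁) from ht))
        have h3 := par_fix cs₂ hl h2
        rw [act_mul, act_mul] at h3
        have h4 := congrArg (act cs₂ w) h3
        rwa [act_act_inv] at h4
    have h2 := act_inv_act cs₂ w l
    rw [h1] at h2
    rw [← h2]; rfl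
  have hK : ∃ s, s ∉ K := by
    by_contra hc
    push Not at hc
    have : K = Set.univ := Set.eq_univ_of_forall hc
    subst this
    obtain ⟨x, hx⟩ := par_ne_top cs₁ t
    apply hx
    rw [hw, par_univ]; trivial
  obtain ⟨s, hs⟩ := hK
  refine ⟨s, ?_⟩
  have hKs : K = {s}ᶜ := by
    ext s'
    constructor
    · rintro h1 rfl
      exact hs h1
    · intro h1
      by_contra h2
      have hne : s ≠ s' := fun e => h1 e.symm
      have z1 : ∀ j ∈ K, om s (rt j) = 0 := fun j hj => om_ne (fun e => hs (e ▸ hj))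
      have z2 : ∀ j ∈ K, om s' (rt j) = 0 := fun j hj => om_ne (fun e => h2 (e ▸ hj))
      by_cases hp : act cs₂ w (om s) (rho cs₂ k (rt r)) = 0
      · exact om_nonzero s (key _ z1 hp)
      · set p := act cs₂ w (om s) (rho cs₂ k (rt r)) with hpd
        set q := act cs₂ w (om s') (rho cs₂ k (rt r)) with hqd
        have := key (q • om s + (-p) • om s') (fun j hj => by
          rw [LinearMap.add_apply, LinearMap.smul_apply, LinearMap.smul_apply, z1 j hj, z2 j hj]
          simp) (by
          rw [act_add, act_smul, act_smul, LinearMap.add_apply, LinearMap.smul_apply,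
            LinearMap.smul_apply, ← hpd, ← hqd, smul_eq_mul, smul_eq_mul]
          ring)
        have h5 := congrArg (fun f => f (rt s')) this
        simp only [LinearMap.add_apply, LinearMap.smul_apply, om_self, om_ne hne,
          LinearMap.zero_apply, smul_eq_mul] at h5
        apply hp
        linarith
  subst hKs
  exact ⟨w, hw⟩

theorem max_claim [Finite B₁] [Finite B₂] (h : ∀ J₁ : Set B₁, ∃ J₂ : Set B₂,
      ConjugateSubgroups (stdParabolic cs₁ J₁) (stdParabolic cs₂ J₂)) (s : B₂) :
    ∃ t, ConjugateSubgroups (stdParabolic cs₂ {s}ᶜ) (stdParabolic cs₁ {t}ᶜ) := by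
  classical
  choose a ha using step_c cs₁ cs₂ h
  let st : Setoid B₁ :=
    { r := fun x y => ConjugateSubgroups (stdParabolic cs₁ {x}ᶜ) (stdParabolic cs₁ {y}ᶜ)
      iseqv := ⟨fun _ => conj_refl _, conj_symm, conj_trans⟩ }
  let rep : B₁ → B₁ := fun x => (Quotient.mk st x).out
  have hrep : ∀ x, ConjugateSubgroups (stdParabolic cs₁ {rep x}ᶜ) (stdParabolic cs₁ {x}ᶜ) :=
    fun x => Quotient.exact (Quotient.out_eq (Quotient.mk st x))
  have hrep' : ∀ x y, ConjugateSubgroups (stdParabolic cs₁ {x}ᶜ) (stdParabolic cs₁ {y}ᶜ) →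
      rep x = rep y := fun x y hxy => by
    have : Quotient.mk st x = Quotient.mk st y := Quotient.sound hxy
    simp only [rep, this]
  have hex : ∀ t, ∃ b, ConjugateSubgroups (stdParabolic cs₁ {t}ᶜ) (stdParabolic cs₂ {b}ᶜ) ∧
      (t = rep t → b = a (rep t)) ∧ (t ≠ rep t → b ≠ a (rep t)) := by
    intro t
    by_cases ht : t = rep t
    · exact ⟨a (rep t), conj_trans (conj_symm (hrep t)) (ha _), fun _ => rfl,
        fun h' => absurd ht h'⟩
    · obtain ⟨h1, h2⟩ := two_class cs₁ (Ne.symm ht) (conj_symm (hrep t))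
      obtain ⟨b, hb, hb'⟩ := exists_mate cs₂ (finIdx_conj (ha _) h1) (selfNorm_conj (ha _) h2)
      exact ⟨b, conj_trans (conj_symm (hrep t)) (conj_trans (ha _) (conj_symm hb')),
        fun h' => absurd h' ht, fun _ => hb⟩
  choose f hf hf1 hf2 using hex
  have hinj : Function.Injective f := by
    intro x y hxy
    have hc : ConjugateSubgroups (stdParabolic cs₁ {x}ᶜ) (stdParabolic cs₁ {y}ᶜ) :=
      conj_trans (hf x) (by rw [hxy]; exact conj_symm (hf y))
    have hr := hrep' x y hc
    by_cases hx : x = rep x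
    · by_cases hy : y = rep y
      · rw [hx, hy, hr]
      · exact absurd (by rw [← hxy, hf1 x hx, hr]) (hf2 y hy)
    · by_cases hy : y = rep y
      · exact absurd (by rw [hxy, hf1 y hy, hr]) (hf2 x hx)
      · refine class_le_two cs₁ (a := rep x) (Ne.symm hx) ?_ (conj_symm (hrep x)) ?_
        · rw [hr]; exact Ne.symm hy
        · rw [hr]; exact conj_symm (hrep y)
  have hb := hinj.bijective_of_nat_card_le (step_b cs₁ cs₂ h)
  obtain ⟨t, rfl⟩ := hb.2 s
  exact ⟨t, conj_symm (hf t)⟩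

end Max

universe u v w

/-- Conjugation by `w` as an isomorphism between conjugate subgroups. -/
def conjEquiv {W : Type*} [Group W] {P Q : Subgroup W} (w : W)
    (hw : ∀ x, x ∈ P ↔ w⁻¹ * x * w ∈ Q) : Q ≃* P where
  toFun y := ⟨w * y * w⁻¹, by
    rw [hw]
    have : w⁻¹ * (w * (y : W) * w⁻¹) * w = y := by group
    rw [this]; exact y.2⟩
  invFun x := ⟨w⁻¹ * x * w, (hw _).1 x.2⟩
  left_inv y := by ext; simp only; group
  right_inv y := by ext; simp only; group
  map_mul' x y := by ext; simp only [Subgroup.coe_mul]; group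

theorem main_ind (n : ℕ) : ∀ (W : Type u) [Group W] (B₁ : Type v) (B₂ : Type w)
    [Finite B₁] [Finite B₂] (M₁ : CoxeterMatrix B₁) (M₂ : CoxeterMatrix B₂)
    (cs₁ : CoxeterSystem M₁ W) (cs₂ : CoxeterSystem M₂ W), Nat.card B₂ = n →
    (∀ J₁ : Set B₁, ∃ J₂ : Set B₂,
      ConjugateSubgroups (stdParabolic cs₁ J₁) (stdParabolic cs₂ J₂)) →
    ∀ J₂ : Set B₂, ∃ J₁ : Set B₁,
      ConjugateSubgroups (stdParabolic cs₂ J₂) (stdParabolic cs₁ J₁) := by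
  induction n using Nat.strong_induction_on with
  | _ n ih =>
  intro W _ B₁ B₂ _ _ M₁ M₂ cs₁ cs₂ hn h J₂
  subst hn
  by_cases hJ : J₂ = Set.univ
  · subst hJ
    exact ⟨Set.univ, 1, fun x => by rw [par_univ, par_univ]; simp⟩
  obtain ⟨s, hs⟩ := (Set.ne_univ_iff_exists_notMem _).1 hJ
  have hsub : J₂ ⊆ {s}ᶜ := by
    rintro j hj rfl
    exact hs hj
  obtain ⟨t, w, hw⟩ := max_claim cs₁ cs₂ h s
  have hcard : Nat.card ({s}ᶜ : Set B₂) < Nat.card B₂ :=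
    Finite.card_subtype_lt (p := fun x => x ∈ ({s}ᶜ : Set B₂)) (x := s) (by simp)
  let e := conjEquiv w hw
  have hA : ∀ (J : Set ({t}ᶜ : Set B₁)) (x : stdParabolic cs₂ {s}ᶜ),
      x ∈ stdParabolic ((sysK cs₁ {t}ᶜ).map e) J ↔
        w⁻¹ * (x : W) * w ∈ stdParabolic cs₁ (Subtype.val '' J) := by
    intro J x
    rw [mem_map, mem_sysK]; rfl
  obtain ⟨J₁, b, hb⟩ := ih _ hcard (stdParabolic cs₂ {s}ᶜ) _ _ _ _
    ((sysK cs₁ {t}ᶜ).map e) (sysK cs₂ {s}ᶜ) rfl (by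
      intro J₁
      obtain ⟨J, g, hg⟩ := h (Subtype.val '' J₁)
      have hle : ∀ x ∈ stdParabolic cs₁ (Subtype.val '' J₁), w * x * w⁻¹ ∈ stdParabolic cs₂ {s}ᶜ := by
        intro x hx
        rw [hw]
        have : w⁻¹ * (w * x * w⁻¹) * w = x := by group
        rw [this]
        refine par_mono cs₁ ?_ hx
        rintro _ ⟨y, _, rfl⟩
        exact y.2
      obtain ⟨a, ha, J', hJ', hx'⟩ := sub_par cs₂ (J := J) (K := {s}ᶜ) (g := w * g) (by
        intro x hx
        have := hle (g * x * g⁻¹) (by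
          rw [hg]
          have : g⁻¹ * (g * x * g⁻¹) * g = x := by group
          rwa [this])
        have e1 : w * g * x * (w * g)⁻¹ = w * (g * x * g⁻¹) * w⁻¹ := by group
        rwa [e1])
      refine ⟨Subtype.val ⁻¹' J', (⟨a, ha⟩ : stdParabolic cs₂ {s}ᶜ)⁻¹, fun x => ?_⟩
      rw [hA, mem_sysK, Subtype.image_preimage_coe, Set.inter_eq_right.2 hJ', hx', hg]
      simp only [Subgroup.coe_mul, Subgroup.coe_inv]
      have : g⁻¹ * (w⁻¹ * (x : W) * w) * g =
        (a * (w * g))⁻¹ * (a⁻¹⁻¹ * x * a⁻¹) * (a * (w * g)) := by group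
      rw [this]) (Subtype.val ⁻¹' J₂)
  refine ⟨Subtype.val '' J₁, b * w, fun x => ?_⟩
  have main : ∀ hx : x ∈ stdParabolic cs₂ {s}ᶜ, x ∈ stdParabolic cs₂ J₂ ↔
      ((b : W) * w)⁻¹ * x * (b * w) ∈ stdParabolic cs₁ (Subtype.val '' J₁) := by
    intro hx
    have := hb ⟨x, hx⟩
    rw [hA, mem_sysK, Subtype.image_preimage_coe, Set.inter_eq_right.2 hsub] at this
    rw [this]
    simp only [Subgroup.coe_mul, Subgroup.coe_inv]
    have e1 : w⁻¹ * ((b : W)⁻¹ * x * b) * w = ((b : W) * w)⁻¹ * x * (b * w) := by group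
    rw [e1]
  constructor
  · intro hx
    exact (main (par_mono cs₂ hsub hx)).1 hx
  · intro hx
    refine (main ?_).2 hx
    have h1 : ((b : W) * w)⁻¹ * x * (b * w) ∈ stdParabolic cs₁ {t}ᶜ := by
      refine par_mono cs₁ ?_ hx
      rintro _ ⟨y, _, rfl⟩
      exact y.2
    have h2 : (b : W)⁻¹ * x * b ∈ stdParabolic cs₂ {s}ᶜ := by
      rw [hw]
      have e1 : w⁻¹ * ((b : W)⁻¹ * x * b) * w = ((b : W) * w)⁻¹ * x * (b * w) := by group
      rwa [e1]
    have h3 := mul_mem (mul_mem b.2 h2) (inv_mem b.2)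
    have e2 : (b : W) * ((b : W)⁻¹ * x * b) * (b : W)⁻¹ = x := by group
    rwa [e2] at h3

end Main


end CoxGeom

/-- If every standard parabolic of `S₁` is conjugate to a standard parabolic of `S₂`, then
every standard parabolic of `S₂` is conjugate to a standard parabolic of `S₁`. -/
theorem stmt_16 {W : Type*} [Group W] {B₁ B₂ : Type*} [Fintype B₁] [Fintype B₂]
    {M₁ : CoxeterMatrix B₁} {M₂ : CoxeterMatrix B₂}
    (cs₁ : CoxeterSystem M₁ W) (cs₂ : CoxeterSystem M₂ W)
    (h : ∀ J₁ : Set B₁, ∃ J₂ : Set B₂,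
      ConjugateSubgroups (stdParabolic cs₁ J₁) (stdParabolic cs₂ J₂)) :
    ∀ J₂ : Set B₂, ∃ J₁ : Set B₁,
      ConjugateSubgroups (stdParabolic cs₂ J₂) (stdParabolic cs₁ J₁) := by
  exact CoxGeom.main_ind _ W B₁ B₂ M₁ M₂ cs₁ cs₂ rfl h
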